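/- Let d ∈ ℕ, α ∈ (1, 2), K ∈ ℝ and p > 0. Let H: ℝ^d → ℝ be continuous, differentiable on ℝ^d∖{0}, and positively homogeneous of degree α (H(λx) = λ^α·H(x) for all λ > 0 and x ∈ ℝ^d). Set H_K(x) = H(x) + (1/2)K|x|² and H_{pK}(x) = H(x) + (1/2)pK|x|², and assume both are convex on ℝ^d. Let ξ ∈ ℝ^d∖{0} and y = ∇H_K(ξ). Then ∇H_{pK}(p^{1/(α−2)}·ξ) = p^{(α−1)/(α−2)}·y, and the Fenchel conjugates H_L*(w) := sup_{x ∈ ℝ^d}((x, w) − H_L(x)) satisfy H_{pK}*(p^{(α−1)/(α−2)}·y) = p^{α/(α−2)}·H_K*(y). -/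

import Mathlib

/-!
Put `c = p ^ (1 / (α - 2))`, the solution of `p * c ^ 2 = c ^ α`. By this choice of `c` the
homogeneous part and the quadratic part of `H_{pK}` scale by the same factor along `x ↦ c • x`:
`H_{pK} (c • x) = m * H_K x` with `m = c ^ α = p ^ (α / (α - 2))`. Differentiating this identity
gives `∇H_{pK} (c • ξ) = (m / c) • ∇H_K ξ`, and substituting `c • x` for `x` in the supremum gives
`H_{pK}* ((m / c) • w) = m * H_K* w`.
-/

open RealInnerProductSpace

/-- The Fenchel conjugate `H*(y) = sup_x (⟪x, y⟫ - H x)` of a function on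
`ℝ^d`. -/
noncomputable def fenchelConj (d : ℕ) (H : EuclideanSpace ℝ (Fin d) → ℝ)
    (y : EuclideanSpace ℝ (Fin d)) : ℝ :=
  ⨆ x : EuclideanSpace ℝ (Fin d), (⟪x, y⟫ - H x)

section Exponents

variable {p : ℝ}

theorem rpow_one_div_rpow (hp : 0 ≤ p) (α β : ℝ) : (p ^ (1 / β)) ^ α = p ^ (α / β) := by
  rw [← Real.rpow_mul hp, one_div_mul_eq_div]

theorem rpow_div_div_rpow_one_div (hp : 0 < p) (α β : ℝ) :
    p ^ (α / β) / p ^ (1 / β) = p ^ ((α - 1) / β) := by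
  rw [← Real.rpow_sub hp, ← sub_div]

theorem mul_sq_rpow_one_div_sub_two {α : ℝ} (hp : 0 < p) (hα : α ≠ 2) :
    p * (p ^ (1 / (α - 2))) ^ 2 = p ^ (α / (α - 2)) := by
  have hα' : α - 2 ≠ 0 := sub_ne_zero.mpr hα
  have hexp : α / (α - 2) = 1 + 1 / (α - 2) * 2 := by field_simp; ring
  rw [hexp, Real.rpow_add hp, Real.rpow_one, Real.rpow_mul hp.le, Real.rpow_two]

end Exponents

section QuadraticPerturbation

variable {E : Type*} [NormedAddCommGroup E]

/-- The quadratic perturbation `H_K = H + (1/2) K |·|²` of a Hamiltonian `H`. -/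
noncomputable def addQuadratic (H : E → ℝ) (K : ℝ) (x : E) : ℝ :=
  H x + (1/2) * K * ‖x‖ ^ 2

theorem addQuadratic_smul [NormedSpace ℝ E] {H : E → ℝ} {α p : ℝ} (hp : 0 < p) (hα : α ≠ 2)
    (hhom : ∀ lam : ℝ, 0 < lam → ∀ x, H (lam • x) = lam ^ α * H x) (K : ℝ) (x : E) :
    addQuadratic H (p * K) (p ^ (1 / (α - 2)) • x) = p ^ (α / (α - 2)) * addQuadratic H K x := by
  have hc : 0 < p ^ (1 / (α - 2)) := Real.rpow_pos_of_pos hp _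
  simp only [addQuadratic]
  rw [hhom _ hc, rpow_one_div_rpow hp.le, norm_smul, Real.norm_of_nonneg hc.le,
    ← mul_sq_rpow_one_div_sub_two hp hα]
  ring

end QuadraticPerturbation

theorem ereal_mul_iSup {ι : Sort*} (f : ι → EReal) {a : EReal} (ha : 0 < a) (ha' : a ≠ ⊤) :
    a * ⨆ i, f i = ⨆ i, a * f i := by
  simp only [mul_comm a]
  exact GaloisConnection.l_iSup (u := (· / a)) fun _ _ ↦ (EReal.le_div_iff_mul_le ha ha').symm

theorem ereal_coe_iSup {ι : Sort*} [Nonempty ι] {f : ι → ℝ} (hf : BddAbove (Set.range f)) :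
    ((⨆ i, f i : ℝ) : EReal) = ⨆ i, (f i : EReal) :=
  EReal.coe_strictMono.monotone.map_ciSup_of_continuousAt
    continuous_coe_real_ereal.continuousAt hf

theorem ereal_iSup_coe_of_not_bddAbove {ι : Sort*} {f : ι → ℝ} (hf : ¬BddAbove (Set.range f)) :
    ⨆ i, (f i : EReal) = ⊤ := by
  refine EReal.eq_top_iff_forall_lt _ |>.mpr fun b ↦ ?_
  obtain ⟨_, ⟨i, rfl⟩, hi⟩ := not_bddAbove_iff.mp hf b
  exact (EReal.coe_lt_coe_iff.mpr hi).trans_le (le_iSup (fun i ↦ (f i : EReal)) i)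

theorem ereal_toReal_iSup_coe {ι : Sort*} [Nonempty ι] (f : ι → ℝ) :
    (⨆ i, (f i : EReal)).toReal = ⨆ i, f i := by
  by_cases hf : BddAbove (Set.range f)
  · rw [← ereal_coe_iSup hf, EReal.toReal_coe]
  · rw [ereal_iSup_coe_of_not_bddAbove hf, EReal.toReal_top, Real.iSup_of_not_bddAbove hf]

section Scaling

variable {E : Type*} [NormedAddCommGroup E] [InnerProductSpace ℝ E]
  {F G : E → ℝ} {c m : ℝ}

theorem hasGradientAt_smul_of_scaling [CompleteSpace E] {x y : E} (hc : c ≠ 0)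
    (hFG : ∀ x, G (c • x) = m * F x) (hF : HasGradientAt F y x) :
    HasGradientAt G ((m / c) • y) (c • x) := by
  have hG : G = fun z ↦ m * F (c⁻¹ • z) := by
    funext z
    rw [← hFG, smul_inv_smul₀ hc]
  have hF' : HasFDerivAt F (InnerProductSpace.toDual ℝ E y) (c⁻¹ • c • x) := by
    rw [inv_smul_smul₀ hc]
    exact hF.hasFDerivAt
  have hsmul : HasFDerivAt (fun z : E ↦ c⁻¹ • z) (c⁻¹ • ContinuousLinearMap.id ℝ E) (c • x) :=
    (hasFDerivAt_id (c • x)).const_smul c⁻¹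
  rw [hG, hasGradientAt_iff_hasFDerivAt]
  refine ((hF'.comp (c • x) hsmul).const_mul m).congr_fderiv ?_
  ext v
  simp [div_eq_mul_inv, mul_assoc]

/-- The Fenchel conjugate `F*(w) = sup_x (⟪x, w⟫ - F x)` with values in the extended reals, so that
it is the true supremum where `x ↦ ⟪x, w⟫ - F x` is unbounded above; the real-valued `fenchelConj`
is `0` there. -/
noncomputable def fenchelConjugate (F : E → ℝ) (w : E) : EReal :=
  ⨆ x : E, ((⟪x, w⟫ - F x : ℝ) : EReal)

theorem fenchelConjugate_smul_of_scaling (hc : c ≠ 0) (hm : 0 < m)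
    (hFG : ∀ x, G (c • x) = m * F x) (w : E) :
    fenchelConjugate G ((m / c) • w) = m * fenchelConjugate F w := by
  have hterm (x : E) : ⟪c • x, (m / c) • w⟫ - G (c • x) = m * (⟪x, w⟫ - F x) := by
    rw [hFG, real_inner_smul_left, real_inner_smul_right]
    field_simp
  simp only [fenchelConjugate]
  rw [ereal_mul_iSup _ (EReal.coe_pos.mpr hm) (EReal.coe_ne_top m),
    ← (MulAction.surjective₀ hc).iSup_comp]
  simp only [hterm, EReal.coe_mul]

end Scaling

theorem toReal_fenchelConjugate (d : ℕ) (F : EuclideanSpace ℝ (Fin d) → ℝ)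
    (w : EuclideanSpace ℝ (Fin d)) : (fenchelConjugate F w).toReal = fenchelConj d F w :=
  ereal_toReal_iSup_coe _

theorem iteration_scaling_of_fenchel_conjugate_general {E : Type*} [NormedAddCommGroup E]
    [InnerProductSpace ℝ E] [CompleteSpace E] {α p : ℝ} (hα : α ≠ 2) (hp : 0 < p) {H : E → ℝ}
    (hhom : ∀ lam : ℝ, 0 < lam → ∀ x, H (lam • x) = lam ^ α * H x) (K : ℝ) :
    (∀ ξ y, HasGradientAt (addQuadratic H K) y ξ →
      HasGradientAt (addQuadratic H (p * K))
        (p ^ ((α - 1) / (α - 2)) • y) (p ^ (1 / (α - 2)) • ξ)) ∧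
    ∀ w, fenchelConjugate (addQuadratic H (p * K)) (p ^ ((α - 1) / (α - 2)) • w) =
      (p ^ (α / (α - 2)) : ℝ) * fenchelConjugate (addQuadratic H K) w := by
  have hc : p ^ (1 / (α - 2)) ≠ 0 := (Real.rpow_pos_of_pos hp _).ne'
  have hscale := addQuadratic_smul hp hα hhom K
  rw [← rpow_div_div_rpow_one_div hp]
  exact ⟨fun _ _ ↦ hasGradientAt_smul_of_scaling hc hscale,
    fenchelConjugate_smul_of_scaling hc (Real.rpow_pos_of_pos hp _) hscale⟩

/-- The scaling computation (4.7)–(4.8) behind the `p`-th iteration map: for a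
Hamiltonian `H` positively homogeneous of degree `α ∈ (1,2)`, the gradients and
Fenchel conjugates of `H_K = H + (1/2)K|·|²` and `H_{pK} = H + (1/2)pK|·|²`
scale as stated. -/
theorem iteration_scaling_of_fenchel_conjugate
    (d : ℕ) (α K p : ℝ) (hα : α ∈ Set.Ioo (1:ℝ) 2) (hp : 0 < p)
    (H : EuclideanSpace ℝ (Fin d) → ℝ) (hHc : Continuous H)
    (hHd : ∀ x : EuclideanSpace ℝ (Fin d), x ≠ 0 → DifferentiableAt ℝ H x)
    (hhom : ∀ lam : ℝ, 0 < lam → ∀ x, H (lam • x) = lam ^ α * H x)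
    (hconvK : ConvexOn ℝ Set.univ (fun x => H x + (1/2) * K * ‖x‖ ^ 2))
    (hconvpK : ConvexOn ℝ Set.univ (fun x => H x + (1/2) * (p * K) * ‖x‖ ^ 2))
    (ξ : EuclideanSpace ℝ (Fin d)) (hξ : ξ ≠ 0)
    (y : EuclideanSpace ℝ (Fin d))
    (hy : y = gradient (fun x => H x + (1/2) * K * ‖x‖ ^ 2) ξ) :
    gradient (fun x => H x + (1/2) * (p * K) * ‖x‖ ^ 2)
        ((p ^ ((1:ℝ) / (α - 2))) • ξ) = (p ^ ((α - 1) / (α - 2))) • y ∧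
    fenchelConj d (fun x => H x + (1/2) * (p * K) * ‖x‖ ^ 2)
        ((p ^ ((α - 1) / (α - 2))) • y)
      = p ^ (α / (α - 2)) * fenchelConj d (fun x => H x + (1/2) * K * ‖x‖ ^ 2) y := by
  obtain ⟨hgrad, hconj⟩ := iteration_scaling_of_fenchel_conjugate_general hα.2.ne hp hhom K
  have hdiff : DifferentiableAt ℝ (addQuadratic H K) ξ :=
    (hHd ξ hξ).add ((differentiableAt_id.norm_sq ℝ).const_mul _)
  refine ⟨(hgrad ξ y (hy ▸ hdiff.hasGradientAt)).gradient, ?_⟩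
  have hconj_real := congrArg EReal.toReal (hconj y)
  rwa [EReal.toReal_mul, EReal.toReal_coe, toReal_fenchelConjugate,
    toReal_fenchelConjugate] at hconj_real
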